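/- arXiv:2312.06058 — 7 statements merged into one kernel-verified Lean document; each statement's English description precedes it below -/
import Mathlib

section
/- Let f : G → Q be a surjective group homomorphism with G finitely generated and Q finitely presented, and let P = {(g,h) ∈ G×G : f(g) = f(h)} be the fibre product of f with itself. Then P is a finitely generated group. -/
/-!
The fibre product is generated by the diagonal of `G` together with `ker f × 1`. Conjugating
`(t, 1)` by the diagonal gives every `(g * t * g⁻¹, 1)`, so `ker f` need only be finitely generated
as a *normal* subgroup.

To see that it is, lift a finite presentation `π : F → Q` through `f` to `φ : F → G`. As `f` maps
`φ F` onto `Q`, finitely many elements of `ker f` suffice to generate `G` together with `φ F`, and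
modulo their normal closure `ker f` consists of images of elements of `ker π`.
-/

/-- The fibre product `{(g,h) ∈ G × G : f g = f h}` of a homomorphism `f : G →* Q` with
itself, as a subgroup of `G × G`. -/
def fiberProduct {G Q : Type*} [Group G] [Group Q] (f : G →* Q) : Subgroup (G × G) where
  carrier := {x | f x.1 = f x.2}
  one_mem' := rfl
  mul_mem' := by
    intro a b ha hb
    simp only [Set.mem_setOf_eq, Prod.fst_mul, Prod.snd_mul, map_mul] at *
    rw [ha, hb]
  inv_mem' := by
    intro a ha
    simp only [Set.mem_setOf_eq, Prod.fst_inv, Prod.snd_inv, map_inv] at *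
    rw [ha]

/-- A group is finitely presented if it is the quotient of a finitely generated free
group by the normal closure of a finite set of relators. -/
def FinitelyPresented (G : Type*) [Group G] : Prop :=
  ∃ (n : ℕ) (rels : Finset (FreeGroup (Fin n))),
    Nonempty (G ≃* PresentedGroup ((rels : Set (FreeGroup (Fin n)))))

theorem FinitelyPresented.isFinitelyPresented {G : Type*} [Group G] (hG : FinitelyPresented G) :
    Group.IsFinitelyPresented G := by
  obtain ⟨n, rels, ⟨e⟩⟩ := hG
  exact .equiv e.symm

section Kernel

variable {F G Q : Type*} [Group F] [Group G] [Group Q]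

theorem exists_freeGroup_hom_comp_eq {α : Type*} (π : FreeGroup α →* Q) {f : G →* Q}
    (hf : Function.Surjective f) : ∃ φ : FreeGroup α →* G, f.comp φ = π := by
  choose σ hσ using hf
  refine ⟨FreeGroup.lift fun a => σ (π (FreeGroup.of a)), ?_⟩
  ext a
  simp [hσ]

theorem exists_finite_subset_sup_closure_eq_top [hG : Group.FG G] {H N : Subgroup G} [N.Normal]
    (h : H ⊔ N = ⊤) :
    ∃ T : Set G, T.Finite ∧ T ⊆ N ∧ H ⊔ Subgroup.closure T = ⊤ := by
  obtain ⟨S, hS, hSfin⟩ := Group.fg_iff.1 hG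
  have exists_factorization (s : G) : ∃ a ∈ H, ∃ t ∈ N, a * t = s :=
    Subgroup.mem_sup_of_normal_right.1 (h ▸ Subgroup.mem_top s)
  choose a ha t ht hat using exists_factorization
  refine ⟨t '' S, hSfin.image t, Set.image_subset_iff.2 fun s _ => ht s, top_unique ?_⟩
  rw [← hS, Subgroup.closure_le]
  intro s hs
  rw [← hat s]
  exact Subgroup.mul_mem_sup (ha s) (Subgroup.subset_closure (Set.mem_image_of_mem t hs))

theorem range_sup_ker_eq_top {φ : F →* G} {f : G →* Q} (h : Function.Surjective (f.comp φ)) :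
    φ.range ⊔ f.ker = ⊤ := by
  rw [← Subgroup.comap_map_eq, MonoidHom.map_range, MonoidHom.range_eq_top.2 h, Subgroup.comap_top]

theorem ker_le_of_range_sup_eq_top {φ : F →* G} {f : G →* Q} {N : Subgroup G} [N.Normal]
    (hN : N ≤ f.ker) (htop : φ.range ⊔ N = ⊤) (hφ : (f.comp φ).ker.map φ ≤ N) : f.ker ≤ N := by
  intro g hg
  obtain ⟨_, ⟨v, rfl⟩, n, hn, rfl⟩ :=
    Subgroup.mem_sup_of_normal_right.1 (htop ▸ Subgroup.mem_top g)
  have hv : φ v ∈ f.ker := (f.ker.mul_mem_cancel_right (hN hn)).1 hg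
  exact mul_mem (hφ (Subgroup.mem_map_of_mem φ hv)) hn

theorem isFinitelyNormallyGenerated_ker_of_comp [Group.FG G] {φ : F →* G} {f : G →* Q}
    (hsurj : Function.Surjective (f.comp φ))
    (hker : (f.comp φ).ker.IsFinitelyNormallyGenerated) :
    f.ker.IsFinitelyNormallyGenerated := by
  obtain ⟨R, hRfin, hR⟩ := hker
  obtain ⟨T, hTfin, hTker, hT⟩ :=
    exists_finite_subset_sup_closure_eq_top (range_sup_ker_eq_top hsurj)
  have hle : Subgroup.normalClosure (φ '' R ∪ T) ≤ f.ker := by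
    refine Subgroup.normalClosure_le_normal (Set.union_subset ?_ hTker)
    rintro _ ⟨r, hr, rfl⟩
    exact hR.le (Subgroup.subset_normalClosure hr)
  have htop : φ.range ⊔ Subgroup.normalClosure (φ '' R ∪ T) = ⊤ := by
    refine top_unique (hT.ge.trans (sup_le_sup_left ?_ _))
    exact Subgroup.closure_le_normalClosure.trans
      (Subgroup.normalClosure_mono Set.subset_union_right)
  have hmap : (f.comp φ).ker.map φ ≤ Subgroup.normalClosure (φ '' R ∪ T) := by
    rw [← hR]
    exact (Subgroup.map_normalClosure_le R φ).trans
      (Subgroup.normalClosure_mono Set.subset_union_left)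
  exact ⟨φ '' R ∪ T, (hRfin.image φ).union hTfin,
    hle.antisymm (ker_le_of_range_sup_eq_top hle htop hmap)⟩

theorem isFinitelyNormallyGenerated_ker [Group.FG G] [Group.IsFinitelyPresented Q] {f : G →* Q}
    (hf : Function.Surjective f) : f.ker.IsFinitelyNormallyGenerated := by
  obtain ⟨n, π, hπ, hker⟩ := Group.IsFinitelyPresented.out (G := Q)
  obtain ⟨φ, rfl⟩ := exists_freeGroup_hom_comp_eq π hf
  exact isFinitelyNormallyGenerated_ker_of_comp hπ hker

end Kernel

section FiberProduct

variable {G H Q : Type*} [Group G] [Group H] [Group Q]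

theorem sup_map_inl_normalClosure {D : Subgroup (G × H)}
    (hD : Function.Surjective (Prod.fst ∘ D.subtype)) (T : Set G) :
    D ⊔ (Subgroup.normalClosure T).map (MonoidHom.inl G H) =
      D ⊔ (Subgroup.closure T).map (MonoidHom.inl G H) := by
  set K := D ⊔ (Subgroup.closure T).map (MonoidHom.inl G H)
  have hK : Function.Surjective (Prod.fst ∘ K.subtype) := fun g => by
    obtain ⟨x, hx⟩ := hD g
    exact ⟨⟨x, Subgroup.mem_sup_left x.2⟩, hx⟩
  have : K.goursatFst.Normal := Subgroup.normal_goursatFst hK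
  have hT : T ⊆ K.goursatFst := fun t ht => Subgroup.mem_goursatFst.2 <|
    Subgroup.mem_sup_right (Subgroup.mem_map_of_mem _ (Subgroup.subset_closure ht))
  refine le_antisymm (sup_le le_sup_left ?_)
    (sup_le_sup_left (Subgroup.map_mono Subgroup.closure_le_normalClosure) D)
  rw [Subgroup.map_le_iff_le_comap]
  exact fun g hg => Subgroup.mem_goursatFst.1 (Subgroup.normalClosure_le_normal hT hg)

variable (G) in
/-- The diagonal embedding `g ↦ (g, g)` of a group into its square; its range is the diagonal
subgroup, which lies in every fibre product `fiberProduct f`. -/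
def diagonalHom : G →* G × G :=
  (MonoidHom.id G).prod (MonoidHom.id G)

theorem fiberProduct_eq_range_diagonalHom_sup (f : G →* Q) :
    fiberProduct f = (diagonalHom G).range ⊔ f.ker.map (MonoidHom.inl G G) := by
  refine le_antisymm ?_ (sup_le ?_ ?_)
  · rintro ⟨g, h⟩ (hgh : f g = f h)
    have hker : g * h⁻¹ ∈ f.ker := by simp [MonoidHom.mem_ker, hgh]
    have hmul : (g, h) = MonoidHom.inl G G (g * h⁻¹) * diagonalHom G h := by simp [diagonalHom]
    rw [hmul]
    exact mul_mem (Subgroup.mem_sup_right (Subgroup.mem_map_of_mem _ hker))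
      (Subgroup.mem_sup_left ⟨h, rfl⟩)
  · rintro _ ⟨g, rfl⟩
    exact (rfl : f g = f g)
  · rintro _ ⟨k, hk, rfl⟩
    exact (MonoidHom.mem_ker.1 hk).trans (map_one f).symm

theorem fiberProduct_fg_of_isFinitelyNormallyGenerated_ker [Group.FG G] {f : G →* Q}
    (hf : f.ker.IsFinitelyNormallyGenerated) : (fiberProduct f).FG := by
  obtain ⟨T, hTfin, hT⟩ := hf
  have hfst : Function.Surjective (Prod.fst ∘ (diagonalHom G).range.subtype) :=
    fun g => ⟨⟨diagonalHom G g, g, rfl⟩, rfl⟩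
  rw [fiberProduct_eq_range_diagonalHom_sup, ← hT, sup_map_inl_normalClosure hfst,
    MonoidHom.map_closure]
  have hdiag : (diagonalHom G).range.FG := (Group.fg_iff_subgroup_fg _).1 inferInstance
  exact hdiag.sup ((Subgroup.fg_iff _).2 ⟨_, rfl, hTfin.image _⟩)

end FiberProduct

/-- **Theorem (Platonov–Tavgen / Bridson–Grunewald, part 1).** If `f : G → Q` is a
surjective homomorphism with `G` finitely generated and `Q` finitely presented, then the
fibre product `P = {(g,h) : f g = f h} ≤ G × G` is finitely generated. -/
theorem fiberProduct_fg_of_fg_of_fp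
    (G Q : Type) [Group G] [Group Q]
    (hG : Group.FG G) (hQ : FinitelyPresented Q)
    (f : G →* Q) (hf : Function.Surjective f) :
    (fiberProduct f).FG := by
  have := hQ.isFinitelyPresented
  exact fiberProduct_fg_of_isFinitelyNormallyGenerated_ker (isFinitelyNormallyGenerated_ker hf)
end

section
/- Let f : G → Q be a surjective group homomorphism with G finitely generated and Q finitely presented, and let P = {(g,h) ∈ G×G : f(g) = f(h)} ≤ G×G be the fibre product. Suppose that every homomorphism from Q to a finite group is trivial (i.e. the profinite completion of Q is trivial) and that H₂(Q,ℤ) = 0. Then the inclusion P ↪ G×G induces an isomorphism of profinite completions: for every finite group F, the restriction map Hom(G×G, F) → Hom(P, F) is a bijection. -/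
/-- `H₂(G,ℤ) = 0`, expressed via Hopf's formula: for every presentation `G = F/R` with
`F` a free group, `R ∩ [F,F] ≤ [F,R]`. -/
def SchurMultiplierTrivial (G : Type u) [Group G] : Prop :=
  ∀ (ι : Type u) (π : FreeGroup ι →* G), Function.Surjective π →
    MonoidHom.ker π ⊓ commutator (FreeGroup ι) ≤
      ⁅(⊤ : Subgroup (FreeGroup ι)), MonoidHom.ker π⁆

/-- Every homomorphism from `Q` to a finite group is trivial, i.e. the profinite
completion of `Q` is trivial. -/
def ProfinitelyTrivial (Q : Type*) [Group Q] : Prop :=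
  ∀ (F : Type) [Group F] [Finite F] (φ : Q →* F) (q : Q), φ q = 1

open scoped commutatorElement

theorem FinitelyPresented.fg {Q : Type*} [Group Q] (hQ : FinitelyPresented Q) : Group.FG Q := by
  obtain ⟨n, rels, ⟨e⟩⟩ := hQ
  have : Group.FG (PresentedGroup (rels : Set (FreeGroup (Fin n)))) := QuotientGroup.fg _
  exact Group.fg_of_surjective (f := e.symm.toMonoidHom) e.symm.surjective

theorem finite_of_isSimpleModule_int (A : Type*) [AddCommGroup A] [IsSimpleModule ℤ A] :
    Finite A := by
  obtain ⟨I, hI, ⟨e⟩⟩ := isSimpleModule_iff_quot_maximal.1 ‹IsSimpleModule ℤ A›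
  have hI_ne_bot : I ≠ ⊥ := Ring.ne_bot_of_isMaximal_of_not_isField hI Int.not_isField
  have : Finite (ℤ ⧸ I) := Ideal.finiteQuotientOfFreeOfNeBot I hI_ne_bot
  exact Finite.of_equiv _ e.symm.toEquiv

theorem finiteIndex_eqLocus {G F : Type*} [Group G] [Group F] [Finite F] (a b : G →* F) :
    (a.eqLocus b).FiniteIndex := by
  refine Subgroup.finiteIndex_of_le (H := a.ker ⊓ b.ker) fun x hx => ?_
  exact (MonoidHom.mem_ker.1 hx.1).trans (MonoidHom.mem_ker.1 hx.2).symm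

namespace ProfinitelyTrivial

variable {G Q : Type*} [Group G] [Group Q]

theorem hom_eq_one (h : ProfinitelyTrivial Q) {F : Type*} [Group F] [Finite F] (φ : Q →* F) :
    φ = 1 := by
  ext q
  have hq := h (Shrink.{0} F) (Shrink.mulEquiv.symm.toMonoidHom.comp φ) q
  exact (MulEquiv.map_eq_one_iff Shrink.mulEquiv.symm).1 hq

theorem eq_top_of_finiteIndex (h : ProfinitelyTrivial Q) (H : Subgroup Q) [H.FiniteIndex] :
    H = ⊤ := by
  have hcore : H.normalCore = ⊤ := by
    rw [← QuotientGroup.ker_mk' H.normalCore, h.hom_eq_one (QuotientGroup.mk' H.normalCore),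
      MonoidHom.ker_one]
  exact top_le_iff.1 (hcore.ge.trans H.normalCore_le)

theorem eq_top_of_ker_le (h : ProfinitelyTrivial Q) {f : G →* Q} (hf : Function.Surjective f)
    (H : Subgroup G) [H.FiniteIndex] (hker : f.ker ≤ H) : H = ⊤ := by
  have : (H.map f).FiniteIndex :=
    ⟨by rw [Subgroup.index_map_eq _ hf hker]; exact Subgroup.FiniteIndex.index_ne_zero⟩
  rw [← Subgroup.comap_map_eq_self hker, h.eq_top_of_finiteIndex (H.map f), Subgroup.comap_top]

-- A nontrivial finitely generated abelian group has a maximal subgroup, whose index is finite.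
theorem isPerfect (h : ProfinitelyTrivial Q) [Group.FG Q] : Group.IsPerfect Q := by
  rw [Group.isPerfect_def]
  by_contra hne
  have : Nontrivial (Abelianization Q) := QuotientGroup.nontrivial_iff.2 hne
  have : Group.FG (Abelianization Q) := QuotientGroup.fg _
  have : Module.Finite ℤ (Additive (Abelianization Q)) :=
    Module.Finite.iff_addGroup_fg.2 inferInstance
  obtain ⟨m, hm⟩ := IsCoatomic.exists_coatom (Submodule ℤ (Additive (Abelianization Q)))
  have : IsSimpleModule ℤ (Additive (Abelianization Q) ⧸ m) := isSimpleModule_iff_isCoatom.2 hm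
  have : Finite (Additive (Abelianization Q) ⧸ m) := finite_of_isSimpleModule_int _
  let φ : Q →* Multiplicative (Additive (Abelianization Q) ⧸ m) :=
    m.mkQ.toAddMonoidHom.toMultiplicativeRight.comp Abelianization.of
  refine hm.1 (eq_top_iff.2 fun x _ => ?_)
  obtain ⟨q, rfl⟩ := QuotientGroup.mk_surjective (s := commutator Q) x
  exact (Submodule.Quotient.mk_eq_zero m).1 (DFunLike.congr_fun (h.hom_eq_one φ) q)

end ProfinitelyTrivial

theorem commutator_le_commutator_sup_commutator {E : Type*} [Group E] {H N : Subgroup E}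
    [N.Normal] (hHN : H ⊔ N = ⊤) : commutator E ≤ ⁅H, H⁆ ⊔ ⁅(⊤ : Subgroup E), N⁆ := by
  have hright (a : E) {n : E} (hn : n ∈ N) : ⁅a, n⁆ ∈ ⁅(⊤ : Subgroup E), N⁆ :=
    Subgroup.commutator_mem_commutator (Subgroup.mem_top a) hn
  have hleft {n : E} (hn : n ∈ N) (b : E) : ⁅n, b⁆ ∈ ⁅(⊤ : Subgroup E), N⁆ := by
    rw [← commutatorElement_inv]
    exact inv_mem (hright b hn)
  have hconj (g : E) {x : E} (hx : x ∈ ⁅(⊤ : Subgroup E), N⁆) :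
      g * x * g⁻¹ ∈ ⁅H, H⁆ ⊔ ⁅(⊤ : Subgroup E), N⁆ :=
    Subgroup.mem_sup_right (Subgroup.Normal.conj_mem inferInstance x hx g)
  refine Subgroup.commutator_le.2 fun x _ y _ => ?_
  obtain ⟨a, ha, m, hm, rfl⟩ := Subgroup.mem_sup_of_normal_right.1 (hHN.ge (Subgroup.mem_top x))
  obtain ⟨b, hb, n, hn, rfl⟩ := Subgroup.mem_sup_of_normal_right.1 (hHN.ge (Subgroup.mem_top y))
  rw [commutatorElement_mul_left_eq_conj_mul, commutatorElement_mul_right_eq_mul_conj a,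
    mul_assoc ⁅a, b⁆, mul_assoc ⁅a, b⁆]
  exact mul_mem (hconj a (hleft hm _)) <| mul_mem
    (Subgroup.mem_sup_left (Subgroup.commutator_mem_commutator ha hb)) (hconj b (hright a hn))

namespace SchurMultiplierTrivial

-- The lift `q` of the free presentation need not be onto `E`, but its image together with `p.ker`
-- generates `E`, so commutators of `E` come from the free group up to `⁅⊤, p.ker⁆`.
theorem commutator_inf_ker_le {E Q : Type*} [Group E] [Group Q] (hH2 : SchurMultiplierTrivial Q)
    {p : E →* Q} (hp : Function.Surjective p) :
    commutator E ⊓ p.ker ≤ ⁅(⊤ : Subgroup E), p.ker⁆ := by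
  let q : FreeGroup Q →* E := FreeGroup.lift (Function.surjInv hp)
  have hpq_surj : Function.Surjective (p.comp q) := fun x =>
    ⟨FreeGroup.of x, by simp [q, Function.surjInv_eq hp]⟩
  have hgen : q.range ⊔ p.ker = ⊤ := by
    rw [← Subgroup.comap_map_eq, ← MonoidHom.range_comp, MonoidHom.range_eq_top.2 hpq_surj,
      Subgroup.comap_top]
  rintro c ⟨hc, hpc⟩
  obtain ⟨d, hd, k, hk, rfl⟩ :=
    Subgroup.mem_sup_of_normal_right.1 (commutator_le_commutator_sup_commutator hgen hc)
  rw [← map_commutator_eq] at hd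
  obtain ⟨w, hw, rfl⟩ := hd
  have hpw : w ∈ (p.comp q).ker :=
    (Subgroup.mul_mem_cancel_right _ (Subgroup.commutator_le_right _ _ hk)).1 hpc
  refine mul_mem ?_ hk
  have hqw := Subgroup.mem_map_of_mem q (hH2 Q (p.comp q) hpq_surj ⟨hpw, hw⟩)
  rw [Subgroup.map_commutator] at hqw
  exact Subgroup.commutator_mono le_top (Subgroup.map_le_iff_le_comap.2 le_rfl) hqw

end SchurMultiplierTrivial

section CentralExtension

variable {E G Q : Type*} [Group E] [Group G] [Group Q] {f : G →* Q} {p : E →* G}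
  {s : f.ker →* E}

theorem commutator_top_ker_comp_le_range (hcentral : p.ker ≤ Subgroup.center E)
    (hs : ∀ n, p (s n) = n) [s.range.Normal] :
    ⁅(⊤ : Subgroup E), (f.comp p).ker⁆ ≤ s.range := by
  refine Subgroup.commutator_le.2 fun e _ k hk => ?_
  let n : f.ker := ⟨p k, hk⟩
  have hz : (s n)⁻¹ * k ∈ p.ker := by simp [MonoidHom.mem_ker, hs, n]
  have hez : ⁅e, (s n)⁻¹ * k⁆ = 1 :=
    commutatorElement_eq_one_iff_mul_comm.2 (Subgroup.mem_center_iff.1 (hcentral hz) e)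
  have hek : ⁅e, k⁆ = ⁅e, s n⁆ := by
    rw [← mul_inv_cancel_left (s n) k, commutatorElement_mul_right_eq_mul_conj, hez]
    simp
  rw [hek]
  exact Subgroup.commutator_le_right _ _
    (Subgroup.commutator_mem_commutator (Subgroup.mem_top e) ⟨n, rfl⟩)

theorem SchurMultiplierTrivial.disjoint_commutator_sup_range_ker
    (hH2 : SchurMultiplierTrivial Q) (hf : Function.Surjective f) (hp : Function.Surjective p)
    (hcentral : p.ker ≤ Subgroup.center E) (hs : ∀ n, p (s n) = n) [s.range.Normal] :
    Disjoint (commutator E ⊔ s.range) p.ker := by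
  refine Subgroup.disjoint_def.2 fun hx hpx => ?_
  obtain ⟨c, hc, _, ⟨n, rfl⟩, rfl⟩ := Subgroup.mem_sup_of_normal_right.1 hx
  have hfc : c ∈ (f.comp p).ker := by
    have hfn : s n ∈ (f.comp p).ker := by simp [MonoidHom.mem_ker, hs, MonoidHom.mem_ker.1 n.2]
    exact (Subgroup.mul_mem_cancel_right _ hfn).1 (by simp [MonoidHom.mem_ker.1 hpx])
  obtain ⟨m, rfl⟩ : c ∈ s.range := commutator_top_ker_comp_le_range hcentral hs
    (hH2.commutator_inf_ker_le (p := f.comp p) (hf.comp hp) ⟨hc, hfc⟩)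
  have hmn : m * n = 1 := Subtype.ext (by simpa [hs] using hpx)
  rw [← map_mul, hmn, map_one]

theorem map_commutator_sup_range_eq_top [Group.IsPerfect Q] (hf : Function.Surjective f)
    (hp : Function.Surjective p) (hs : ∀ n, p (s n) = n) :
    (commutator E ⊔ s.range).map p = ⊤ := by
  have hker : f.ker ≤ (commutator E ⊔ s.range).map p := fun n hn =>
    ⟨s ⟨n, hn⟩, Subgroup.mem_sup_right ⟨_, rfl⟩, hs _⟩
  have hcomm : (commutator E).map (f.comp p) = ⊤ := by
    have hfp : (f.comp p).range = ⊤ := MonoidHom.range_eq_top.2 (hf.comp hp)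
    rw [map_commutator_eq, hfp, ← commutator_def,
      Group.IsPerfect.commutator_eq_top]
  rw [← Subgroup.comap_map_eq_self hker, Subgroup.map_map,
    top_le_iff.1 (hcomm.ge.trans (Subgroup.map_mono le_sup_left)), Subgroup.comap_top]

theorem SchurMultiplierTrivial.exists_section_extending [Group.IsPerfect Q]
    (hH2 : SchurMultiplierTrivial Q) (hf : Function.Surjective f) (hp : Function.Surjective p)
    (hcentral : p.ker ≤ Subgroup.center E) (hs : ∀ n, p (s n) = n) [s.range.Normal] :
    ∃ σ : G →* E, p.comp σ = MonoidHom.id G ∧ σ.comp f.ker.subtype = s := by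
  let S : Subgroup E := commutator E ⊔ s.range
  have hinj : Function.Injective (p.domRestrict S) := by
    rw [← MonoidHom.ker_eq_bot_iff, MonoidHom.ker_domRestrict, Subgroup.subgroupOf_eq_bot]
    exact (hH2.disjoint_commutator_sup_range_ker hf hp hcentral hs).symm
  have hsurj : Function.Surjective (p.domRestrict S) := by
    rw [← MonoidHom.range_eq_top, MonoidHom.domRestrict_range]
    exact map_commutator_sup_range_eq_top hf hp hs
  let e : S ≃* G := MulEquiv.ofBijective (p.domRestrict S) ⟨hinj, hsurj⟩
  refine ⟨S.subtype.comp e.symm.toMonoidHom, MonoidHom.ext e.apply_symm_apply, ?_⟩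
  ext n
  have hn : e.symm n = ⟨s n, Subgroup.mem_sup_right ⟨n, rfl⟩⟩ :=
    e.symm_apply_eq.2 (hs n).symm
  exact congrArg Subtype.val hn

end CentralExtension

section InnerLift

variable {G M Q : Type*} [Group G] [Group M] [Group Q]

/-- For an action `ρ` of `G` on `M` by automorphisms, the pullback of `ρ` along
`MulAut.conj : M →* MulAut M`: the pairs `(g, a)` such that `ρ g` is conjugation by `a`. When `ρ`
acts by inner automorphisms, it is the central extension of `G` by the centre of `M` whose
sections are the lifts of `ρ` to homomorphisms `G →* M`. -/
def innerLift (ρ : G →* MulAut M) : Subgroup (G × M) :=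
  (ρ.comp (MonoidHom.fst G M)).eqLocus (MulAut.conj.comp (MonoidHom.snd G M))

namespace innerLift

variable {ρ : G →* MulAut M}

theorem mem_iff {x : G × M} : x ∈ innerLift ρ ↔ ρ x.1 = MulAut.conj x.2 := Iff.rfl

/-- The projection of `innerLift ρ` to the group acting. -/
def fst (ρ : G →* MulAut M) : innerLift ρ →* G := (MonoidHom.fst G M).comp (innerLift ρ).subtype

theorem fst_surjective (hρ : ∀ g, ρ g ∈ (MulAut.conj (G := M)).range) :
    Function.Surjective (fst ρ) := fun g => by
  obtain ⟨a, ha⟩ := hρ g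
  exact ⟨⟨(g, a), ha.symm⟩, rfl⟩

theorem ker_fst_le_center : (fst ρ).ker ≤ Subgroup.center (innerLift ρ) := by
  rintro ⟨⟨_, a⟩, ha⟩ rfl
  refine Subgroup.mem_center_iff.2 fun ⟨⟨g, b⟩, _⟩ => Subtype.ext (Prod.ext (by simp) ?_)
  have hab : a * b * a⁻¹ = b := by simpa using (DFunLike.congr_fun (mem_iff.1 ha) b).symm
  exact (mul_inv_eq_iff_eq_mul.1 hab).symm

/-- The graph of `α : f.ker →* M` as a homomorphism into `innerLift ρ`. -/
def graph {f : G →* Q} (α : f.ker →* M) (hα : ∀ n : f.ker, ρ n = MulAut.conj (α n)) :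
    f.ker →* innerLift ρ :=
  (f.ker.subtype.prod α).codRestrict (innerLift ρ) hα

theorem normal_range_graph {f : G →* Q} {α : f.ker →* M}
    (hα : ∀ n : f.ker, ρ n = MulAut.conj (α n))
    (hequiv : ∀ g (n : f.ker), ρ g (α n) = α (MulAut.conjNormal g n)) :
    (graph α hα).range.Normal := by
  refine ⟨?_⟩
  rintro _ ⟨n, rfl⟩ ⟨⟨g, a⟩, hga⟩
  refine ⟨MulAut.conjNormal g n, Subtype.ext (Prod.ext rfl ?_)⟩
  exact (hequiv g n).symm.trans (DFunLike.congr_fun (mem_iff.1 hga) (α n))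

end innerLift

theorem SchurMultiplierTrivial.exists_lift_conj_extending [Group.IsPerfect Q]
    (hH2 : SchurMultiplierTrivial Q) {f : G →* Q} (hf : Function.Surjective f)
    {ρ : G →* MulAut M} (hρ : ∀ g, ρ g ∈ (MulAut.conj (G := M)).range) {α : f.ker →* M}
    (hα : ∀ n : f.ker, ρ n = MulAut.conj (α n))
    (hequiv : ∀ g (n : f.ker), ρ g (α n) = α (MulAut.conjNormal g n)) :
    ∃ A : G →* M, MulAut.conj.comp A = ρ ∧ A.comp f.ker.subtype = α := by
  have := innerLift.normal_range_graph hα hequiv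
  obtain ⟨σ, hfst, hσ⟩ := hH2.exists_section_extending hf (innerLift.fst_surjective hρ)
    innerLift.ker_fst_le_center (s := innerLift.graph α hα) fun _ => rfl
  refine ⟨(MonoidHom.snd G M).comp ((innerLift ρ).subtype.comp σ), ?_, ?_⟩
  · ext1 g
    have hg : (σ g : G × M).1 = g := DFunLike.congr_fun hfst g
    exact (innerLift.mem_iff.1 (σ g).2).symm.trans (by rw [hg])
  · ext n
    exact congrArg (fun x : innerLift ρ => x.1.2) (DFunLike.congr_fun hσ n)

end InnerLift

theorem commute_inv_mul_of_conj_eq {F : Type*} [Group F] {a d y : F}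
    (h : a * y * a⁻¹ = d * y * d⁻¹) : Commute y (a⁻¹ * d) := by
  calc y * (a⁻¹ * d) = a⁻¹ * (a * y * a⁻¹) * d := by group
    _ = a⁻¹ * d * y := by rw [h]; group

theorem exists_eq_mul_of_commute {G F : Type*} [Group G] [Group F] (A δ : G →* F)
    (h : ∀ g k, Commute (A k) ((A g)⁻¹ * δ g)) :
    ∃ φ : G × G →* F, ∀ g k, φ (g, k) = A g * ((A k)⁻¹ * δ k) := by
  let B : G →* F := MonoidHom.mk' (fun g => (A g)⁻¹ * δ g) fun g k => by
    calc (A (g * k))⁻¹ * δ (g * k) = (A k)⁻¹ * ((A g)⁻¹ * δ g) * δ k := by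
          simp only [map_mul, mul_inv_rev, mul_assoc]
      _ = (A g)⁻¹ * δ g * ((A k)⁻¹ * δ k) := by rw [(h g k).inv_left.eq, mul_assoc]
  exact ⟨A.noncommCoprod B fun k g => h g k, fun _ _ => rfl⟩

namespace fiberProduct

variable {G Q F : Type*} [Group G] [Group Q] [Group F] {f : G →* Q}

/-- The diagonal embedding of `G` into the fibre product. -/
def diag (f : G →* Q) : G →* fiberProduct f :=
  ((MonoidHom.id G).prod (MonoidHom.id G)).codRestrict (fiberProduct f) fun _ => rfl

/-- The embedding `n ↦ (n, 1)` of the kernel of `f` into the fibre product. -/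
def inl (f : G →* Q) : f.ker →* fiberProduct f :=
  ((MonoidHom.inl G G).comp f.ker.subtype).codRestrict (fiberProduct f) fun n =>
    (MonoidHom.mem_ker.1 n.2).trans f.map_one.symm

theorem coe_diag (f : G →* Q) (g : G) : (diag f g : G × G) = (g, g) := rfl

theorem coe_inl (f : G →* Q) (n : f.ker) : (inl f n : G × G) = ((n : G), 1) := rfl

theorem eq_inl_mul_diag (x : fiberProduct f) :
    ∃ n : f.ker, x = inl f n * diag f x.1.2 ∧ x.1.1 = n * x.1.2 := by
  obtain ⟨⟨g, k⟩, hgk⟩ := x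
  have hn : g * k⁻¹ ∈ f.ker := by
    rw [MonoidHom.mem_ker, map_mul, map_inv, mul_inv_eq_one]
    exact hgk
  have hg : g = g * k⁻¹ * k := by group
  exact ⟨⟨g * k⁻¹, hn⟩, Subtype.ext (Prod.ext hg (one_mul k).symm), hg⟩

theorem mul_inl_mul_inv (x : fiberProduct f) (n : f.ker) :
    x * inl f n * x⁻¹ = inl f (MulAut.conjNormal x.1.1 n) :=
  Subtype.ext (Prod.ext rfl (by simp [coe_inl f]))

theorem normal_range_inl (f : G →* Q) : (inl f).range.Normal :=
  ⟨by rintro _ ⟨n, rfl⟩ x; exact ⟨_, (mul_inl_mul_inv x n).symm⟩⟩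

theorem restrict_injective (hf : Function.Surjective f) (hQhat : ProfinitelyTrivial Q) [Finite F] :
    Function.Injective (fun φ : (G × G) →* F => φ.comp (fiberProduct f).subtype) := by
  intro φ φ' h
  have hP (x : fiberProduct f) : φ x = φ' x := DFunLike.congr_fun h x
  let a := φ.comp (MonoidHom.inl G G)
  let a' := φ'.comp (MonoidHom.inl G G)
  have := finiteIndex_eqLocus a a'
  have htop : a.eqLocus a' = ⊤ :=
    hQhat.eq_top_of_ker_le hf _ fun n hn => hP (inl f ⟨n, hn⟩)
  have ha : a = a' := MonoidHom.ext fun g => htop.ge (Subgroup.mem_top g)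
  ext ⟨g, k⟩
  have hgk : ((g, k) : G × G) = (g * k⁻¹, 1) * (diag f k : G × G) := by simp [coe_diag]
  have hg : φ (g * k⁻¹, 1) = φ' (g * k⁻¹, 1) := DFunLike.congr_fun ha (g * k⁻¹)
  rw [hgk, map_mul, map_mul, hP, hg]

theorem exists_hom_extending_inl [Group.IsPerfect Q] (hf : Function.Surjective f)
    (hQhat : ProfinitelyTrivial Q) (hH2 : SchurMultiplierTrivial Q) [Finite F]
    {ψ : fiberProduct f →* F} (hψ : Function.Surjective ψ) :
    ∃ A : G →* F, (∀ n : f.ker, A n = ψ (inl f n)) ∧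
      ∀ g k, Commute (A k) ((A g)⁻¹ * ψ (diag f g)) := by
  let M : Subgroup F := (inl f).range.map ψ
  have : M.Normal := (normal_range_inl f).map ψ hψ
  let α : f.ker →* M := (ψ.comp (inl f)).codRestrict M fun n => ⟨inl f n, ⟨n, rfl⟩, rfl⟩
  let ρ : G →* MulAut M := MulAut.conjNormal.comp (ψ.comp (diag f))
  have hconj (x : fiberProduct f) (n : f.ker) :
      MulAut.conjNormal (ψ x) (α n) = α (MulAut.conjNormal x.1.1 n) := by
    ext
    calc ((MulAut.conjNormal (ψ x) (α n) : M) : F) = ψ x * ψ (inl f n) * (ψ x)⁻¹ :=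
          MulAut.conjNormal_apply _ _
      _ = ψ (inl f (MulAut.conjNormal x.1.1 n)) := by
          rw [← mul_inl_mul_inv, map_mul, map_mul, map_inv]
  have hα (n : f.ker) : ρ n = MulAut.conj (α n) := by
    ext ⟨_, _, ⟨m, rfl⟩, rfl⟩
    exact congrArg Subtype.val ((hconj (diag f n) m).trans (hconj (inl f n) m).symm)
  have : ((MulAut.conj (G := M)).range.comap ρ).FiniteIndex :=
    Subgroup.finiteIndex_of_le ((MulAut.conj (G := M)).range.ker_le_comap ρ)
  have hρ : (MulAut.conj (G := M)).range.comap ρ = ⊤ :=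
    hQhat.eq_top_of_ker_le hf _ fun n hn => ⟨α ⟨n, hn⟩, (hα ⟨n, hn⟩).symm⟩
  obtain ⟨A, hAρ, hAα⟩ := hH2.exists_lift_conj_extending hf
    (fun g => hρ.ge (Subgroup.mem_top g)) hα (fun g => hconj (diag f g))
  exact ⟨M.subtype.comp A, fun n => congrArg Subtype.val (DFunLike.congr_fun hAα n), fun g k =>
    commute_inv_mul_of_conj_eq (congrArg Subtype.val
      (DFunLike.congr_fun (DFunLike.congr_fun hAρ g) (A k)))⟩

theorem restrict_surjective [Group.IsPerfect Q] (hf : Function.Surjective f)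
    (hQhat : ProfinitelyTrivial Q) (hH2 : SchurMultiplierTrivial Q) [Finite F] :
    Function.Surjective (fun φ : (G × G) →* F => φ.comp (fiberProduct f).subtype) := by
  intro ψ
  obtain ⟨A, hA, hcomm⟩ :=
    exists_hom_extending_inl hf hQhat hH2 ψ.rangeRestrict_surjective
  obtain ⟨φ, hφ⟩ := exists_eq_mul_of_commute A (ψ.rangeRestrict.comp (diag f)) hcomm
  refine ⟨ψ.range.subtype.comp φ, MonoidHom.ext fun x => ?_⟩
  obtain ⟨n, hx, hn⟩ := eq_inl_mul_diag x
  have hφx : φ x = ψ.rangeRestrict x := by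
    calc φ x = A x.1.1 * ((A x.1.2)⁻¹ * ψ.rangeRestrict (diag f x.1.2)) := hφ x.1.1 x.1.2
      _ = ψ.rangeRestrict (inl f n) * ψ.rangeRestrict (diag f x.1.2) := by
        rw [hn, map_mul, hA, mul_assoc, mul_inv_cancel_left]
      _ = ψ.rangeRestrict x := by rw [← map_mul, ← hx]
  exact congrArg Subtype.val hφx

end fiberProduct

theorem fiberProduct_inclusion_induces_profinite_iso_general {G Q : Type*} [Group G] [Group Q]
    [Group.IsPerfect Q] (f : G →* Q) (hf : Function.Surjective f)
    (hQhat : ProfinitelyTrivial Q) (hH2 : SchurMultiplierTrivial Q)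
    (F : Type*) [Group F] [Finite F] :
    Function.Bijective (fun φ : (G × G) →* F => φ.comp (fiberProduct f).subtype) :=
  ⟨fiberProduct.restrict_injective hf hQhat, fiberProduct.restrict_surjective hf hQhat hH2⟩

/-- **Theorem (Platonov–Tavgen / Bridson–Grunewald, part 2).** If `f : G → Q` is a
surjective homomorphism with `G` finitely generated, `Q` finitely presented, `Q̂ = 1`
and `H₂(Q,ℤ) = 0`, then the inclusion of the fibre product `P ↪ G × G` induces an
isomorphism of profinite completions: for every finite group `F`, restriction
`Hom(G × G, F) → Hom(P, F)` is a bijection. -/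
theorem fiberProduct_inclusion_induces_profinite_iso
    (G Q : Type) [Group G] [Group Q]
    (hG : Group.FG G) (hQ : FinitelyPresented Q)
    (f : G →* Q) (hf : Function.Surjective f)
    (hQhat : ProfinitelyTrivial Q) (hH2 : SchurMultiplierTrivial Q) :
    ∀ (F : Type) [Group F] [Finite F],
      Function.Bijective (fun φ : (G × G) →* F => φ.comp (fiberProduct f).subtype) := by
  have := hQ.fg
  have := hQhat.isPerfect
  exact fun F => fiberProduct_inclusion_induces_profinite_iso_general f hf hQhat hH2 F
end

section
/- Let B be a finitely generated group and let Z ≤ B be a central subgroup such that the quotient group B/Z is finitely presented. Then Z is finitely generated. -/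
section Center

variable {G : Type*} [Group G]

theorem normal_of_le_center {N : Subgroup G} (hN : N ≤ Subgroup.center G) : N.Normal where
  conj_mem z hz g := by
    rwa [Subgroup.mem_center_iff.mp (hN hz) g, mul_inv_cancel_right]

theorem normalClosure_eq_closure_of_subset_center {S : Set G} (hS : S ⊆ Subgroup.center G) :
    Subgroup.normalClosure S = Subgroup.closure S :=
  have := normal_of_le_center ((Subgroup.closure_le _).mpr hS)
  le_antisymm (Subgroup.normalClosure_le_normal Subgroup.subset_closure)
    Subgroup.closure_le_normalClosure

theorem fg_of_isFinitelyNormallyGenerated_of_le_center {N : Subgroup G}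
    (hN : N.IsFinitelyNormallyGenerated) (hcenter : N ≤ Subgroup.center G) : N.FG := by
  obtain ⟨S, hSfin, rfl⟩ := hN
  have hS : S ⊆ Subgroup.center G := Subgroup.subset_normalClosure.trans hcenter
  exact (Subgroup.fg_iff _).mpr ⟨S, (normalClosure_eq_closure_of_subset_center hS).symm, hSfin⟩

end Center

theorem exists_finite_subset_closure_sup_eq_top {G : Type*} [Group G] [hG : Group.FG G]
    {N H : Subgroup G} [N.Normal] (hNH : N ⊔ H = ⊤) :
    ∃ S : Set G, S.Finite ∧ S ⊆ N ∧ Subgroup.closure S ⊔ H = ⊤ := by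
  obtain ⟨T, hT, hTfin⟩ := Group.fg_iff.mp hG
  have hdecomp (g : G) : ∃ k ∈ N, ∃ h ∈ H, k * h = g :=
    Subgroup.mem_sup_of_normal_left.mp (hNH ▸ Subgroup.mem_top g)
  choose k hkN h hhH hkh using hdecomp
  refine ⟨k '' T, hTfin.image k, Set.image_subset_iff.mpr fun t _ ↦ hkN t, ?_⟩
  rw [eq_top_iff, ← hT, Subgroup.closure_le]
  intro t ht
  rw [← hkh t]
  exact Subgroup.mul_mem_sup (Subgroup.subset_closure (Set.mem_image_of_mem k ht)) (hhH t)

section Comp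

variable {F B C : Type*} [Group F] [Group B] [Group C] {φ : F →* B} {π : B →* C}

theorem ker_sup_range_eq_top_of_surjective_comp (h : Function.Surjective (π.comp φ)) :
    π.ker ⊔ φ.range = ⊤ := by
  rw [sup_comm, ← Subgroup.comap_map_eq, ← MonoidHom.range_comp, MonoidHom.range_eq_top.mpr h,
    Subgroup.comap_top]

theorem ker_le_sup_map_ker_comp {N : Subgroup B} [N.Normal] (hN : N ≤ π.ker)
    (htop : N ⊔ φ.range = ⊤) : π.ker ≤ N ⊔ (π.comp φ).ker.map φ := by
  intro b hb
  obtain ⟨k, hk, _, ⟨x, rfl⟩, rfl⟩ :=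
    Subgroup.mem_sup_of_normal_left.mp (htop ▸ Subgroup.mem_top b)
  have hx : x ∈ (π.comp φ).ker := (Subgroup.mul_mem_cancel_left _ (hN hk)).mp hb
  exact Subgroup.mul_mem_sup hk (Subgroup.mem_map_of_mem φ hx)

theorem ker_isFinitelyNormallyGenerated_of_comp [Group.FG B]
    (hsurj : Function.Surjective (π.comp φ))
    (hker : (π.comp φ).ker.IsFinitelyNormallyGenerated) :
    π.ker.IsFinitelyNormallyGenerated := by
  obtain ⟨R, hRfin, hR⟩ := hker
  obtain ⟨S, hSfin, hSker, hStop⟩ :=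
    exists_finite_subset_closure_sup_eq_top (ker_sup_range_eq_top_of_surjective_comp hsurj)
  have hRker : φ '' R ⊆ π.ker :=
    Set.image_subset_iff.mpr fun r hr ↦ hR.le (Subgroup.subset_normalClosure hr)
  have hle : Subgroup.normalClosure (S ∪ φ '' R) ≤ π.ker :=
    Subgroup.normalClosure_le_normal (Set.union_subset hSker hRker)
  have htop : Subgroup.normalClosure (S ∪ φ '' R) ⊔ φ.range = ⊤ := by
    rw [eq_top_iff, ← hStop]
    gcongr
    exact (Subgroup.closure_mono Set.subset_union_left).trans Subgroup.closure_le_normalClosure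
  have hmap : (π.comp φ).ker.map φ ≤ Subgroup.normalClosure (S ∪ φ '' R) := by
    rw [← hR]
    exact (Subgroup.map_normalClosure_le R φ).trans
      (Subgroup.normalClosure_mono Set.subset_union_right)
  exact ⟨S ∪ φ '' R, hSfin.union (hRfin.image φ),
    hle.antisymm ((ker_le_sup_map_ker_comp hle htop).trans (sup_le le_rfl hmap))⟩

end Comp

theorem exists_comp_eq_of_freeGroup {α B C : Type*} [Group B] [Group C] {π : B →* C}
    (hπ : Function.Surjective π) (q : FreeGroup α →* C) :
    ∃ φ : FreeGroup α →* B, π.comp φ = q := by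
  choose b hb using fun a ↦ hπ (q (FreeGroup.of a))
  exact ⟨FreeGroup.lift b, FreeGroup.ext_hom _ _ fun a ↦ by simp [hb]⟩

theorem ker_isFinitelyNormallyGenerated_of_isFinitelyPresented {B C : Type*} [Group B]
    [Group C] [Group.FG B] [hC : Group.IsFinitelyPresented C] {π : B →* C}
    (hπ : Function.Surjective π) : π.ker.IsFinitelyNormallyGenerated := by
  obtain ⟨n, q, hq, hker⟩ := hC
  obtain ⟨φ, rfl⟩ := exists_comp_eq_of_freeGroup hπ q
  exact ker_isFinitelyNormallyGenerated_of_comp hq hker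

/-- **Lemma.** Let `B` be a finitely generated group and `Z ≤ B` a central subgroup
(realised as the kernel of a surjection `π : B → C` onto a group `C ≅ B/Z`). If the
quotient `C` is finitely presented, then `Z` is finitely generated. -/
theorem central_kernel_fg_of_fp_quotient
    (B C : Type*) [Group B] [Group C]
    (hB : Group.FG B)
    (π : B →* C) (hsurj : Function.Surjective π)
    (hcentral : MonoidHom.ker π ≤ Subgroup.center B)
    (hC : FinitelyPresented C) :
    (MonoidHom.ker π).FG := by
  have : Group.IsFinitelyPresented C := hC.isFinitelyPresented
  exact fg_of_isFinitelyNormallyGenerated_of_le_center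
    (ker_isFinitelyNormallyGenerated_of_isFinitelyPresented hsurj) hcentral
end

section
/- Let G be a finitely generated residually finite group, let G₀ ⊴ G be a normal subgroup with G/G₀ finite, and let S ⊴ G be a finitely generated normal subgroup whose image in G/G₀ generates G/G₀ (equivalently S·G₀ = G). Suppose P₀ ≤ G₀ is a finitely generated subgroup such that the inclusion P₀ ↪ G₀ induces an isomorphism of profinite completions, and suppose S ∩ G₀ ⊆ P₀. Let P = ⟨P₀ ∪ S⟩ ≤ G. Then the inclusion P ↪ G induces an isomorphism of profinite completions. -/
/-!
A homomorphism `θ : P₀ ⊔ S →* F` into a finite group restricts to `P₀` and to `S`; extend the first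
restriction to `α : G₀ →* F` and keep the second as `σ : S →* F`. Since `S` normalizes `G₀`, the
group `G₀ ⊔ S` is a quotient of `G₀ ⋊ S`, so `α` and `σ` glue once they agree on `G₀ ⊓ S`, which is
clear as `G₀ ⊓ S ≤ P₀`, and once `α (s * g * s⁻¹) = σ s * α g * (σ s)⁻¹`. Both sides of the latter
are homomorphisms in `g : G₀`, so it suffices to compare them on `P₀`. There `s * g * s⁻¹` lies in
`P₀` again, because `⁅S, P₀⁆ ≤ S ⊓ G₀ ≤ P₀`, and the identity is an instance of multiplicativity of
`θ`.
-/

/-- A group is residually finite if every nontrivial element survives in some finite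
quotient. -/
def ResiduallyFinite (G : Type*) [Group G] : Prop :=
  ∀ g : G, g ≠ 1 → ∃ (F : Type) (_ : Group F) (_ : Finite F) (φ : G →* F), φ g ≠ 1

/-- A homomorphism `ι : P →* G` induces an isomorphism of profinite completions if for
every finite group `F`, composition with `ι` is a bijection `Hom(G,F) → Hom(P,F)`. -/
def InducesProfiniteIso {P G : Type*} [Group P] [Group G] (ι : P →* G) : Prop :=
  ∀ (F : Type) [Group F] [Finite F], Function.Bijective (fun φ : G →* F => φ.comp ι)

section Subgroup

variable {G F : Type*} [Group G]

lemma monoidHom_sup_ext [Monoid F] {H K : Subgroup G} {φ ψ : ↥(H ⊔ K) →* F}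
    (hH : φ.comp (Subgroup.inclusion le_sup_left) = ψ.comp (Subgroup.inclusion le_sup_left))
    (hK : φ.comp (Subgroup.inclusion le_sup_right) = ψ.comp (Subgroup.inclusion le_sup_right)) :
    φ = ψ := by
  have hle : H ⊔ K ≤ (φ.eqLocus ψ).map (H ⊔ K).subtype :=
    sup_le (fun h hh ↦ ⟨_, DFunLike.congr_fun hH ⟨h, hh⟩, rfl⟩)
      fun k hk ↦ ⟨_, DFunLike.congr_fun hK ⟨k, hk⟩, rfl⟩
  ext x
  obtain ⟨y, hy, hyx⟩ := hle x.2
  rwa [← Subtype.ext hyx]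

lemma exists_monoidHom_sup_of_agree_of_conj [Group F] {N K : Subgroup G}
    (hK : K ≤ Subgroup.normalizer N) (α : N →* F) (σ : K →* F)
    (hagree : ∀ (n : N) (k : K), (n : G) = k → α n = σ k)
    (hconj : ∀ k : K, α.comp (N.normalizerMonoidHom (Subgroup.inclusion hK k)).toMonoidHom =
      (MulAut.conj (σ k)).toMonoidHom.comp α) :
    ∃ φ : ↥(N ⊔ K) →* F, φ.comp (Subgroup.inclusion le_sup_left) = α ∧
      φ.comp (Subgroup.inclusion le_sup_right) = σ := by
  let π : N ⋊[N.normalizerMonoidHom.comp (Subgroup.inclusion hK)] K →* ↥(N ⊔ K) :=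
    SemidirectProduct.lift (Subgroup.inclusion le_sup_left) (Subgroup.inclusion le_sup_right)
      fun k ↦ by ext n; simp
  let τ : N ⋊[N.normalizerMonoidHom.comp (Subgroup.inclusion hK)] K →* F :=
    SemidirectProduct.lift α σ hconj
  have hπ : Function.Surjective π := by
    rintro ⟨x, hx⟩
    rw [← SetLike.mem_coe, Subgroup.coe_mul_of_right_le_normalizer_left N K hK] at hx
    obtain ⟨n, hn, k, hk, rfl⟩ := hx
    exact ⟨⟨⟨n, hn⟩, ⟨k, hk⟩⟩, rfl⟩
  have hker : π.ker ≤ τ.ker := by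
    rintro ⟨n, k⟩ hnk
    have hk : (n : G)⁻¹ = k := inv_eq_of_mul_eq_one_right (congrArg Subtype.val hnk)
    change α n * σ k = 1
    rw [← hagree n⁻¹ k hk, map_inv, mul_inv_cancel]
  let φ := π.liftOfSurjective hπ ⟨τ, hker⟩
  have hφ : φ.comp π = τ := π.liftOfRightInverse_comp _ _ _
  refine ⟨φ, ?_, ?_⟩
  · calc φ.comp (Subgroup.inclusion le_sup_left)
        = (φ.comp π).comp SemidirectProduct.inl := by
          rw [MonoidHom.comp_assoc, SemidirectProduct.lift_comp_inl]
      _ = α := by rw [hφ, SemidirectProduct.lift_comp_inl]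
  · calc φ.comp (Subgroup.inclusion le_sup_right)
        = (φ.comp π).comp SemidirectProduct.inr := by
          rw [MonoidHom.comp_assoc, SemidirectProduct.lift_comp_inr]
      _ = σ := by rw [hφ, SemidirectProduct.lift_comp_inr]

open scoped commutatorElement in
lemma le_normalizer_of_inf_le {S N P : Subgroup G} [S.Normal] [N.Normal] (hPN : P ≤ N)
    (hSN : S ⊓ N ≤ P) : S ≤ Subgroup.normalizer P := by
  refine Subgroup.le_normalizer_iff.2 fun s hs p hp ↦ ?_
  have hcomm : ⁅s, p⁆ ∈ P := hSN <|
    Subgroup.commutator_le_inf S N <| Subgroup.commutator_mem_commutator hs (hPN hp)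
  simpa [commutatorElement_def] using P.mul_mem hcomm hp

end Subgroup

lemma InducesProfiniteIso.subtype_of_inclusion {G : Type*} [Group G] {H K : Subgroup G}
    {hHK : H ≤ K} (h : InducesProfiniteIso (Subgroup.inclusion hHK)) (hK : K = ⊤) :
    InducesProfiniteIso H.subtype := by
  subst hK
  intro F _ _
  exact (h F).comp (Subgroup.topEquiv.monoidHomCongrLeftEquiv (N := F)).symm.bijective

theorem grothendieck_pair_of_finite_extension_general {G : Type*} [Group G]
    {G₀ P₀ S : Subgroup G} (hP₀le : P₀ ≤ G₀)
    (hGP : InducesProfiniteIso (Subgroup.inclusion hP₀le))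
    (hSG₀ : S ≤ Subgroup.normalizer G₀) (hSP₀ : S ≤ Subgroup.normalizer P₀)
    (hinf : G₀ ⊓ S ≤ P₀) :
    InducesProfiniteIso (Subgroup.inclusion (sup_le_sup_right hP₀le S)) := by
  intro F _ _
  obtain ⟨hinj, hsurj⟩ := hGP F
  constructor
  · intro φ ψ hφψ
    refine monoidHom_sup_ext (hinj ?_) ?_
    · exact congrArg (fun χ ↦ χ.comp (Subgroup.inclusion le_sup_left)) hφψ
    · exact congrArg (fun χ ↦ χ.comp (Subgroup.inclusion le_sup_right)) hφψ
  · intro θ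
    obtain ⟨α, hα⟩ := hsurj (θ.comp (Subgroup.inclusion le_sup_left))
    let σ : S →* F := θ.comp (Subgroup.inclusion le_sup_right)
    have hαθ (p : P₀) : α (Subgroup.inclusion hP₀le p) = θ (Subgroup.inclusion le_sup_left p) :=
      DFunLike.congr_fun hα p
    have hagree (g : G₀) (s : S) (hgs : (g : G) = s) : α g = σ s :=
      (hαθ ⟨g, hinf ⟨g.2, hgs ▸ s.2⟩⟩).trans (congrArg θ (Subtype.ext hgs))
    have hconj (s : S) :
        α.comp (G₀.normalizerMonoidHom (Subgroup.inclusion hSG₀ s)).toMonoidHom =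
          (MulAut.conj (σ s)).toMonoidHom.comp α := by
      refine hinj (MonoidHom.ext fun p ↦ ?_)
      let q : P₀ := P₀.normalizerMonoidHom (Subgroup.inclusion hSP₀ s) p
      calc α (Subgroup.inclusion hP₀le q)
          = θ (Subgroup.inclusion le_sup_left q) := hαθ q
        _ = θ (Subgroup.inclusion le_sup_right s * Subgroup.inclusion le_sup_left p *
              (Subgroup.inclusion le_sup_right s)⁻¹) := rfl
        _ = σ s * α (Subgroup.inclusion hP₀le p) * (σ s)⁻¹ := by
          simp only [σ, MonoidHom.comp_apply, map_mul, map_inv, hαθ]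
    obtain ⟨φ, hφα, hφσ⟩ := exists_monoidHom_sup_of_agree_of_conj hSG₀ α σ hagree hconj
    refine ⟨φ, monoidHom_sup_ext (.trans ?_ hα) hφσ⟩
    exact congrArg (fun χ ↦ χ.comp (Subgroup.inclusion hP₀le)) hφα

/-- **Lemma (promoting Grothendieck pairs to finite extensions).** Let `G` be a finitely
generated residually finite group, `G₀ ⊴ G` a normal subgroup of finite index, and
`S ⊴ G` a finitely generated normal subgroup with `S·G₀ = G`. If `P₀ ≤ G₀` is a finitely
generated subgroup such that `P₀ ↪ G₀` induces an isomorphism of profinite completions,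
and `S ∩ G₀ ⊆ P₀`, then `P = ⟨P₀, S⟩ ↪ G` also induces an isomorphism of profinite
completions. -/
theorem grothendieck_pair_of_finite_extension
    (G : Type*) [Group G] (hfg : Group.FG G) (hrf : ResiduallyFinite G)
    (G₀ : Subgroup G) (hG₀n : G₀.Normal) (hG₀fi : G₀.FiniteIndex)
    (S : Subgroup G) (hSn : S.Normal) (hSfg : S.FG) (hgen : S ⊔ G₀ = ⊤)
    (P₀ : Subgroup G) (hP₀le : P₀ ≤ G₀) (hP₀fg : P₀.FG)
    (hGP : InducesProfiniteIso (Subgroup.inclusion hP₀le))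
    (hSG₀ : S ⊓ G₀ ≤ P₀) :
    InducesProfiniteIso (P₀ ⊔ S).subtype := by
  have hSP₀ : S ≤ Subgroup.normalizer P₀ := le_normalizer_of_inf_le hP₀le hSG₀
  have hgen' : G₀ ⊔ S = ⊤ := sup_comm S G₀ ▸ hgen
  exact (grothendieck_pair_of_finite_extension_general hP₀le hGP
    Subgroup.le_normalizer_of_normal hSP₀ (inf_comm S G₀ ▸ hSG₀)).subtype_of_inclusion hgen'
end

section
/- Let Δ be a group such that (i) the centraliser in Δ of every nontrivial element is virtually abelian, and (ii) no infinite normal subgroup of Δ is virtually abelian. For i = 1, 2 let p_i : Δ → Q_i be a surjective homomorphism with infinite kernel, and let P_i = {(x,y) ∈ Δ×Δ : p_i(x) = p_i(y)} be the fibre product. If P₁ ≅ P₂, then Q₁ ≅ Q₂. -/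
/-- A group is virtually abelian if it has an abelian subgroup of finite index. -/
def VirtuallyAbelian (G : Type*) [Group G] : Prop :=
  ∃ H : Subgroup G, H.FiniteIndex ∧ ∀ a ∈ H, ∀ b ∈ H, a * b = b * a

namespace VirtuallyAbelian

variable {G H : Type*} [Group G] [Group H]

theorem of_injective (hH : VirtuallyAbelian H) (f : G →* H) (hf : Function.Injective f) :
    VirtuallyAbelian G := by
  obtain ⟨A, hA, hcomm⟩ := hH
  refine ⟨A.comap f, ⟨?_⟩, fun a ha b hb ↦ hf ?_⟩
  · rw [Subgroup.index_comap]
    exact Subgroup.isFiniteRelIndex_of_finiteIndex.relIndex_ne_zero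
  · simpa only [map_mul] using hcomm _ ha _ hb

theorem of_surjective (hG : VirtuallyAbelian G) (f : G →* H) (hf : Function.Surjective f) :
    VirtuallyAbelian H := by
  obtain ⟨A, hA, hcomm⟩ := hG
  refine ⟨A.map f, ⟨ne_zero_of_dvd_ne_zero hA.index_ne_zero (A.index_map_dvd hf)⟩, ?_⟩
  rintro _ ⟨a, ha, rfl⟩ _ ⟨b, hb, rfl⟩
  simpa only [map_mul] using congrArg f (hcomm a ha b hb)

theorem prod (hG : VirtuallyAbelian G) (hH : VirtuallyAbelian H) : VirtuallyAbelian (G × H) := by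
  obtain ⟨A, hA, hcommA⟩ := hG
  obtain ⟨B, hB, hcommB⟩ := hH
  refine ⟨A.prod B, ⟨?_⟩, fun a ha b hb ↦ Prod.ext (hcommA _ ha.1 _ hb.1) (hcommB _ ha.2 _ hb.2)⟩
  rw [Subgroup.index_prod]
  exact mul_ne_zero hA.index_ne_zero hB.index_ne_zero

theorem mono {A B : Subgroup G} (hB : VirtuallyAbelian B) (hAB : A ≤ B) : VirtuallyAbelian A :=
  hB.of_injective (Subgroup.inclusion hAB) (Subgroup.inclusion_injective hAB)

theorem map {A : Subgroup G} (hA : VirtuallyAbelian A) (f : G →* H) : VirtuallyAbelian (A.map f) :=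
  hA.of_surjective (f.subgroupMap A) (f.subgroupMap_surjective A)

theorem of_map {A : Subgroup G} {f : G →* H} (hf : Function.Injective f)
    (hA : VirtuallyAbelian (A.map f)) : VirtuallyAbelian A :=
  hA.of_injective (A.equivMapOfInjective f hf).toMonoidHom (A.equivMapOfInjective f hf).injective

theorem subgroup_prod {A : Subgroup G} {B : Subgroup H} (hA : VirtuallyAbelian A)
    (hB : VirtuallyAbelian B) : VirtuallyAbelian (A.prod B) :=
  (hA.prod hB).of_injective (A.prodEquiv B).toMonoidHom (A.prodEquiv B).injective

end VirtuallyAbelian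

/-- The elements of `G` whose centraliser is not virtually abelian. Being defined by the group
structure alone, this set is preserved by isomorphisms. -/
def largeCentralizer (G : Type*) [Group G] : Set G :=
  {z | ¬ VirtuallyAbelian ↥(Subgroup.centralizer ({z} : Set G))}

section LargeCentralizer

variable {G H : Type*} [Group G] [Group H]

theorem virtuallyAbelian_centralizer_of_apply {f : G →* H} (hf : Function.Injective f) {z : G}
    (hz : VirtuallyAbelian ↥(Subgroup.centralizer ({f z} : Set H))) :
    VirtuallyAbelian ↥(Subgroup.centralizer ({z} : Set G)) := by
  refine .of_map hf (hz.mono ?_)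
  simpa only [Set.image_singleton] using Subgroup.map_centralizer_le_centralizer_image {z} f

theorem preimage_largeCentralizer (e : G ≃* H) :
    e ⁻¹' largeCentralizer H = largeCentralizer G := by
  ext z
  refine not_congr ⟨virtuallyAbelian_centralizer_of_apply (f := (e : G →* H)) e.injective,
    fun hz ↦ virtuallyAbelian_centralizer_of_apply (f := (e.symm : H →* G)) e.symm.injective ?_⟩
  rwa [MonoidHom.coe_coe, e.symm_apply_apply]

theorem map_closure_largeCentralizer (e : G ≃* H) :
    (Subgroup.closure (largeCentralizer G)).map (e : G →* H) =
      Subgroup.closure (largeCentralizer H) := by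
  rw [MonoidHom.map_closure, ← preimage_largeCentralizer e]
  exact congrArg Subgroup.closure (Set.image_preimage_eq _ e.surjective)

end LargeCentralizer

theorem virtuallyAbelian_centralizer_prod {A B : Type*} [Group A] [Group B] {a : A} {b : B}
    (ha : VirtuallyAbelian ↥(Subgroup.centralizer ({a} : Set A)))
    (hb : VirtuallyAbelian ↥(Subgroup.centralizer ({b} : Set B))) :
    VirtuallyAbelian ↥(Subgroup.centralizer ({(a, b)} : Set (A × B))) := by
  refine (ha.subgroup_prod hb).mono fun w hw ↦ ?_
  simpa [Subgroup.mem_prod, Subgroup.mem_centralizer_singleton_iff, Prod.ext_iff] using hw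

section DisjointKernels

variable {G A B : Type*} [Group G] [Group A] [Group B] {f : G →* A} {g : G →* B}

theorem mem_largeCentralizer_of_mem_ker (hdisj : Disjoint f.ker g.ker)
    (hg : ¬ VirtuallyAbelian ↥g.ker) {z : G} (hz : z ∈ f.ker) : z ∈ largeCentralizer G := by
  refine fun hva ↦ hg (hva.mono fun w hw ↦ Subgroup.mem_centralizer_singleton_iff.2 ?_)
  exact Subgroup.commute_of_normal_of_disjoint _ _ inferInstance inferInstance hdisj.symm w z hw hz

theorem largeCentralizer_eq_ker_union_ker (hdisj : Disjoint f.ker g.ker)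
    (hA : ∀ a : A, a ≠ 1 → VirtuallyAbelian ↥(Subgroup.centralizer ({a} : Set A)))
    (hB : ∀ b : B, b ≠ 1 → VirtuallyAbelian ↥(Subgroup.centralizer ({b} : Set B)))
    (hf : ¬ VirtuallyAbelian ↥f.ker) (hg : ¬ VirtuallyAbelian ↥g.ker) :
    largeCentralizer G = (f.ker : Set G) ∪ g.ker := by
  have hinj : Function.Injective (f.prod g) := by
    rw [← MonoidHom.ker_eq_bot_iff, MonoidHom.ker_prod, hdisj.eq_bot]
  refine Set.Subset.antisymm (fun z hz ↦ ?_) (Set.union_subset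
    (fun _ ↦ mem_largeCentralizer_of_mem_ker hdisj hg)
    (fun _ ↦ mem_largeCentralizer_of_mem_ker hdisj.symm hf))
  by_contra! hne
  obtain ⟨hfz, hgz⟩ := not_or.1 hne
  exact hz (virtuallyAbelian_centralizer_of_apply hinj
    (virtuallyAbelian_centralizer_prod (hA _ hfz) (hB _ hgz)))

end DisjointKernels

namespace fiberProduct

variable {G Q : Type*} [Group G] [Group Q] (p : G →* Q)

/-- The first coordinate projection of the fibre product. -/
def fst : ↥(fiberProduct p) →* G := (MonoidHom.fst G G).comp (fiberProduct p).subtype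

/-- The second coordinate projection of the fibre product. -/
def snd : ↥(fiberProduct p) →* G := (MonoidHom.snd G G).comp (fiberProduct p).subtype

theorem fst_surjective : Function.Surjective (fst p) := fun x ↦ ⟨⟨(x, x), rfl⟩, rfl⟩

theorem disjoint_ker_fst_ker_snd : Disjoint (fst p).ker (snd p).ker :=
  Subgroup.disjoint_def.2 fun hfst hsnd ↦ Subtype.ext (Prod.ext hfst hsnd)

theorem map_fst_ker_snd : (snd p).ker.map (fst p) = p.ker := by
  ext x
  constructor
  · rintro ⟨⟨⟨x, y⟩, hxy : p x = p y⟩, rfl : y = 1, rfl⟩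
    exact hxy.trans (map_one p)
  · intro hx
    exact ⟨⟨(x, 1), hx.trans (map_one p).symm⟩, rfl, rfl⟩

theorem map_snd_ker_fst : (fst p).ker.map (snd p) = p.ker := by
  ext y
  constructor
  · rintro ⟨⟨⟨x, y⟩, hxy : p x = p y⟩, rfl : x = 1, rfl⟩
    exact hxy.symm.trans (map_one p)
  · intro hy
    exact ⟨⟨(1, y), (map_one p).trans hy.symm⟩, rfl, rfl⟩

theorem ker_comp_fst : (p.comp (fst p)).ker = (fst p).ker ⊔ (snd p).ker := by
  rw [← MonoidHom.comap_ker, ← map_fst_ker_snd, Subgroup.comap_map_eq, sup_comm]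

theorem closure_largeCentralizer
    (hcent : ∀ x : G, x ≠ 1 → VirtuallyAbelian ↥(Subgroup.centralizer ({x} : Set G)))
    (hker : ¬ VirtuallyAbelian ↥p.ker) :
    Subgroup.closure (largeCentralizer ↥(fiberProduct p)) = (p.comp (fst p)).ker := by
  have hfst : ¬ VirtuallyAbelian ↥(fst p).ker := fun h ↦ hker (map_snd_ker_fst p ▸ h.map (snd p))
  have hsnd : ¬ VirtuallyAbelian ↥(snd p).ker := fun h ↦ hker (map_fst_ker_snd p ▸ h.map (fst p))
  rw [largeCentralizer_eq_ker_union_ker (disjoint_ker_fst_ker_snd p) hcent hcent hfst hsnd,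
    ← Subgroup.sup_eq_closure, ker_comp_fst]

end fiberProduct

theorem quotients_iso_of_fiber_products_iso_general
    {Δ₁ Δ₂ Q₁ Q₂ : Type*} [Group Δ₁] [Group Δ₂] [Group Q₁] [Group Q₂]
    (hcent₁ : ∀ x : Δ₁, x ≠ 1 → VirtuallyAbelian ↥(Subgroup.centralizer ({x} : Set Δ₁)))
    (hcent₂ : ∀ x : Δ₂, x ≠ 1 → VirtuallyAbelian ↥(Subgroup.centralizer ({x} : Set Δ₂)))
    (p₁ : Δ₁ →* Q₁) (h₁ : Function.Surjective p₁) (hk₁ : ¬ VirtuallyAbelian ↥p₁.ker)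
    (p₂ : Δ₂ →* Q₂) (h₂ : Function.Surjective p₂) (hk₂ : ¬ VirtuallyAbelian ↥p₂.ker)
    (hiso : Nonempty (↥(fiberProduct p₁) ≃* ↥(fiberProduct p₂))) :
    Nonempty (Q₁ ≃* Q₂) := by
  obtain ⟨e⟩ := hiso
  let π₁ := p₁.comp (fiberProduct.fst p₁)
  let π₂ := p₂.comp (fiberProduct.fst p₂)
  have hπ₁ : Function.Surjective π₁ := h₁.comp (fiberProduct.fst_surjective p₁)
  have hπ₂ : Function.Surjective π₂ := h₂.comp (fiberProduct.fst_surjective p₂)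
  have hker : π₁.ker.map (e : _ →* _) = π₂.ker := by
    rw [← fiberProduct.closure_largeCentralizer p₁ hcent₁ hk₁,
      ← fiberProduct.closure_largeCentralizer p₂ hcent₂ hk₂, map_closure_largeCentralizer]
  exact ⟨(QuotientGroup.quotientKerEquivOfSurjective π₁ hπ₁).symm.trans
    ((QuotientGroup.congr _ _ e hker).trans
      (QuotientGroup.quotientKerEquivOfSurjective π₂ hπ₂))⟩

/-- **Lemma.** Let `Δ` be a group in which (i) the centraliser of every nontrivial
element is virtually abelian and (ii) no infinite normal subgroup is virtually abelian.
For `i = 1,2` let `pᵢ : Δ → Qᵢ` be surjections with infinite kernel and let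
`Pᵢ ≤ Δ × Δ` be the corresponding fibre products. If `P₁ ≅ P₂` then `Q₁ ≅ Q₂`. -/
theorem quotients_iso_of_fiber_products_iso
    (Δ Q₁ Q₂ : Type*) [Group Δ] [Group Q₁] [Group Q₂]
    (hcent : ∀ x : Δ, x ≠ 1 → VirtuallyAbelian ↥(Subgroup.centralizer ({x} : Set Δ)))
    (hnorm : ∀ N : Subgroup Δ, N.Normal → Infinite ↥N → ¬ VirtuallyAbelian ↥N)
    (p₁ : Δ →* Q₁) (h₁ : Function.Surjective p₁) (hk₁ : Infinite ↥(MonoidHom.ker p₁))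
    (p₂ : Δ →* Q₂) (h₂ : Function.Surjective p₂) (hk₂ : Infinite ↥(MonoidHom.ker p₂))
    (hiso : Nonempty (↥(fiberProduct p₁) ≃* ↥(fiberProduct p₂))) :
    Nonempty (Q₁ ≃* Q₂) :=
  quotients_iso_of_fiber_products_iso_general hcent hcent p₁ h₁ (hnorm _ inferInstance hk₁)
    p₂ h₂ (hnorm _ inferInstance hk₂) hiso
end

section
/- Let Π be a group whose abelianization is finite of odd order, and let τ be an automorphism of Π with τ∘τ = id such that τ(x)·x ∈ [Π,Π] for every x ∈ Π (i.e. τ induces inversion on the abelianization of Π). Let Λ = Π ⋊_τ C₂ be the semidirect product of Π by the cyclic group of order 2 acting via τ. Then the commutator subgroup of Λ equals Π (identified with Π × {1} ≤ Λ), and the abelianization of Λ is cyclic of order 2. -/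
/-!
Write `Λ = P ⋊ C`. If `c` inverts `x` modulo `[P, P]`, then `x ^ 2` is, modulo `[P, P]`, the
quotient of `x` by its conjugate `φ c x`, so it lies in `[Λ, Λ]`. When every element of `P` is a
square modulo `[P, P]`, this puts all of `P` into `[Λ, Λ]`; conversely, `Λ / P ≅ C` is commutative.
Squaring is bijective on a finite group of odd order.
-/

theorem map_mem_commutator {G H : Type*} [Group G] [Group H] (f : G →* H) {x : G}
    (hx : x ∈ commutator G) : f x ∈ commutator H := by
  rw [← Abelianization.ker_of H]
  exact Abelianization.commutator_subset_ker (Abelianization.of.comp f) hx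

section

open SemidirectProduct
open scoped commutatorElement

variable {P C : Type*} [Group P] [Group C] {φ : C →* MulAut P}

theorem inl_aut_mul_inv_eq_commutatorElement (c : C) (x : P) :
    (inl (φ c x * x⁻¹) : P ⋊[φ] C) = ⁅(inr c : P ⋊[φ] C), inl x⁆ := by
  rw [map_mul, inl_aut, map_inv, map_inv, commutatorElement_def]

theorem inl_aut_mul_inv_mem_commutator (c : C) (x : P) :
    (inl (φ c x * x⁻¹) : P ⋊[φ] C) ∈ commutator (P ⋊[φ] C) := by
  rw [inl_aut_mul_inv_eq_commutatorElement]
  exact Subgroup.commutator_mem_commutator (Subgroup.mem_top _) (Subgroup.mem_top _)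

theorem inl_sq_mem_commutator {c : C} {x : P} (hx : φ c x * x ∈ commutator P) :
    (inl (x ^ 2) : P ⋊[φ] C) ∈ commutator (P ⋊[φ] C) := by
  have hdecomp : x ^ 2 = (φ c x * x⁻¹)⁻¹ * (φ c x * x) := by simp [pow_two]
  rw [hdecomp, map_mul, map_inv]
  exact mul_mem (inv_mem (inl_aut_mul_inv_mem_commutator c x)) (map_mem_commutator _ hx)

theorem range_inl_le_commutator
    (hsq : Function.Surjective fun a : Abelianization P ↦ a ^ 2)
    {c : C} (hinv : ∀ x : P, φ c x * x ∈ commutator P) :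
    (inl : P →* P ⋊[φ] C).range ≤ commutator (P ⋊[φ] C) := by
  rintro _ ⟨x, rfl⟩
  obtain ⟨a, ha⟩ := hsq (Abelianization.of x)
  obtain ⟨y, rfl⟩ := QuotientGroup.mk_surjective a
  have hxy : (y ^ 2)⁻¹ * x ∈ commutator P := QuotientGroup.eq.mp ha
  rw [← mul_inv_cancel_left (y ^ 2) x, map_mul]
  exact mul_mem (inl_sq_mem_commutator (hinv y)) (map_mem_commutator _ hxy)

open scoped IsMulCommutative in
theorem commutator_le_range_inl [IsMulCommutative C] :
    commutator (P ⋊[φ] C) ≤ (inl : P →* P ⋊[φ] C).range := by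
  rw [range_inl_eq_ker_rightHom]
  exact Abelianization.commutator_subset_ker rightHom

theorem commutator_of_semidirect_product_by_inverting_involution_general [IsMulCommutative C]
    (hsq : Function.Surjective fun a : Abelianization P ↦ a ^ 2)
    {c : C} (hinv : ∀ x : P, φ c x * x ∈ commutator P) :
    commutator (P ⋊[φ] C) = (inl : P →* P ⋊[φ] C).range ∧
      Nonempty (Abelianization (P ⋊[φ] C) ≃* C) := by
  have hcomm : commutator (P ⋊[φ] C) = (inl : P →* P ⋊[φ] C).range :=
    le_antisymm commutator_le_range_inl (range_inl_le_commutator hsq hinv)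
  have hker := hcomm.trans range_inl_eq_ker_rightHom
  exact ⟨hcomm, ⟨(QuotientGroup.quotientMulEquivOfEq hker).trans
    (QuotientGroup.quotientKerEquivOfSurjective _ rightHom_surjective)⟩⟩

end

/-- **Lemma.** Let `P` (the group `Π` of the paper) be a group whose abelianization is
finite of odd order and let `τ` be an involutive automorphism of `P` inducing inversion
on the abelianization (`τ(x)·x ∈ [P,P]` for all `x`). Let `C` be a (the) cyclic group of
order 2 acting on `P` via `τ`, and let `Λ = P ⋊_τ C`. Then `[Λ,Λ]` is exactly the
canonical copy of `P` in `Λ`, and the abelianization of `Λ` is cyclic of order 2. -/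
theorem commutator_of_semidirect_product_by_inverting_involution
    (P C : Type*) [Group P] [Group C]
    (hfin : Finite (Abelianization P)) (hodd : Odd (Nat.card (Abelianization P)))
    (τ : MulAut P) (hτ : ∀ x, τ (τ x) = x)
    (hinv : ∀ x : P, τ x * x ∈ commutator P)
    (hC : Nat.card C = 2)
    (φ : C →* MulAut P) (hφ : ∀ c : C, c ≠ 1 → φ c = τ) :
    commutator (P ⋊[φ] C) =
      MonoidHom.range (SemidirectProduct.inl : P →* P ⋊[φ] C) ∧
    IsCyclic (Abelianization (P ⋊[φ] C)) ∧
    Nat.card (Abelianization (P ⋊[φ] C)) = 2 := by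
  obtain ⟨c, hc, -⟩ := (Nat.card_eq_two_iff' (1 : C)).mp hC
  have : IsCyclic C := isCyclic_of_prime_card hC
  obtain ⟨hcomm, ⟨e⟩⟩ := commutator_of_semidirect_product_by_inverting_involution_general
    (Nat.coprime_two_right.mpr hodd).pow_left_bijective.surjective (hφ c hc ▸ hinv)
  exact ⟨hcomm, e.isCyclic.mpr this, (Nat.card_congr e.toEquiv).trans hC⟩
end

section
/- Let 1 → Z → Λ → Δ → 1 be an exact sequence of groups in which Z is a nontrivial, torsion-free subgroup contained in the centre of Λ. If H₂(Δ,ℤ) is infinite cyclic (isomorphic to ℤ) and the abelianization of Λ is finite, then Z is infinite cyclic (isomorphic to ℤ). -/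
/-!
Choose a presentation `p : F → Δ` with `F` free and lift it through `π` to `φ : F → Λ`. As
`Z = ker π` is central, `φ` kills `[F, ker p]`; as moreover `Λ = φ(F) Z`, every commutator of `Λ`
is a commutator of elements of `φ(F)`. So `φ` maps the Hopf quotient `(ker p ∩ [F, F]) / [F, ker p]`
onto `Z ∩ [Λ, Λ]`, which is the exactness of `H₂(Δ) → Z → Λᵃᵇ` at `Z`, and `Z ∩ [Λ, Λ]` is cyclic.
If `n` kills `Λᵃᵇ`, then `z ↦ z ^ n` embeds the torsion-free group `Z` into `Z ∩ [Λ, Λ]`.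
-/

/-- `H₂(Δ,ℤ) ≅ ℤ` expressed via Hopf's formula: for every presentation `Δ = F/R` with
`F` free, the Hopf quotient `(R ∩ [F,F]) / [F,R]` is infinite cyclic, i.e. there is
`u ∈ R ∩ [F,F]` such that every element of `R ∩ [F,F]` agrees with a power `u^n` modulo
`[F,R]`, and no nonzero power of `u` lies in `[F,R]`. -/
def SchurMultiplierInfiniteCyclic (Δ : Type u) [Group Δ] : Prop :=
  ∀ (ι : Type u) (π : FreeGroup ι →* Δ), Function.Surjective π →
    ∃ u : FreeGroup ι,
      u ∈ MonoidHom.ker π ⊓ commutator (FreeGroup ι) ∧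
      (∀ x ∈ MonoidHom.ker π ⊓ commutator (FreeGroup ι),
        ∃ n : ℤ, (u ^ n)⁻¹ * x ∈ ⁅(⊤ : Subgroup (FreeGroup ι)), MonoidHom.ker π⁆) ∧
      (∀ n : ℤ, u ^ n ∈ ⁅(⊤ : Subgroup (FreeGroup ι)), MonoidHom.ker π⁆ → n = 0)

/-- The Hopf quotient `(R ∩ [F, F]) / [F, R]` of a homomorphism `p` with kernel `R`, encoded as a
subgroup of `F / [F, R]`. It is `H₂(Δ, ℤ)` when `F` is free and `p : F → Δ` is surjective. -/
def hopfQuotient {F Δ : Type*} [Group F] [Group Δ] (p : F →* Δ) :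
    Subgroup (F ⧸ ⁅(⊤ : Subgroup F), p.ker⁆) :=
  (p.ker ⊓ commutator F).map (QuotientGroup.mk' _)

theorem SchurMultiplierInfiniteCyclic.isCyclic_hopfQuotient {ι Δ : Type u} [Group Δ]
    (h : SchurMultiplierInfiniteCyclic Δ) {p : FreeGroup ι →* Δ} (hp : Function.Surjective p) :
    IsCyclic (hopfQuotient p) := by
  obtain ⟨u, hu, hgen, -⟩ := h ι p hp
  refine (Subgroup.isCyclic_iff_exists_zpowers_eq_top _).2 ⟨QuotientGroup.mk' _ u, ?_⟩
  apply le_antisymm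
  · exact Subgroup.zpowers_le.2 (Subgroup.mem_map_of_mem _ hu)
  · rintro _ ⟨x, hx, rfl⟩
    obtain ⟨n, hn⟩ := hgen x hx
    exact ⟨n, QuotientGroup.eq.2 hn⟩

section Commutator

variable {G : Type*} [Group G]

open scoped commutatorElement in
theorem commutatorElement_mul_mul_of_mem_center {z w : G} (hz : z ∈ Subgroup.center G)
    (hw : w ∈ Subgroup.center G) (a b : G) : ⁅a * z, b * w⁆ = ⁅a, b⁆ := by
  have hzc : ⁅z, b * w⁆ = 1 :=
    commutatorElement_eq_one_iff_mul_comm.2 (Subgroup.mem_center_iff.1 hz _).symm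
  have hwc : ⁅a, w⁆ = 1 := commutatorElement_eq_one_iff_mul_comm.2 (Subgroup.mem_center_iff.1 hw a)
  rw [commutatorElement_mul_left_eq_conj_mul, hzc, mul_one, mul_inv_cancel, one_mul,
    commutatorElement_mul_right_eq_mul_conj, hwc, mul_one, mul_inv_cancel_right]

theorem commutator_eq_of_sup_center_eq_top {H : Subgroup G} (hH : H ⊔ Subgroup.center G = ⊤) :
    commutator G = ⁅H, H⁆ := by
  apply le_antisymm
  · rw [commutator_def, Subgroup.commutator_le]
    intro x _ y _
    obtain ⟨a, ha, z, hz, rfl⟩ := Subgroup.mem_sup_of_normal_right.1 (hH ▸ Subgroup.mem_top x)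
    obtain ⟨b, hb, w, hw, rfl⟩ := Subgroup.mem_sup_of_normal_right.1 (hH ▸ Subgroup.mem_top y)
    rw [commutatorElement_mul_mul_of_mem_center hz hw]
    exact Subgroup.commutator_mem_commutator ha hb
  · exact Subgroup.commutator_mono le_top le_top

end Commutator

section CentralExtension

variable {F Λ Δ : Type*} [Group F] [Group Λ] [Group Δ] {π : Λ →* Δ} {φ : F →* Λ}

theorem subgroup_map_inf_comap (H : Subgroup F) (K : Subgroup Λ) :
    (H ⊓ K.comap φ).map φ = H.map φ ⊓ K :=
  SetLike.coe_injective (Set.image_inter_preimage φ H K)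

theorem commutator_top_ker_comp_le_ker (hπ : π.ker ≤ Subgroup.center Λ) :
    ⁅(⊤ : Subgroup F), (π.comp φ).ker⁆ ≤ φ.ker := by
  rw [Subgroup.commutator_le]
  intro g _ r hr
  rw [MonoidHom.mem_ker, map_commutatorElement, commutatorElement_eq_one_iff_mul_comm]
  exact Subgroup.mem_center_iff.1 (hπ hr) (φ g)

theorem range_sup_ker_eq_top_s19 (h : Function.Surjective (π.comp φ)) : φ.range ⊔ π.ker = ⊤ := by
  refine (Subgroup.eq_top_iff' _).2 fun x => ?_
  obtain ⟨g, hg⟩ := h (π x)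
  have hker : (φ g)⁻¹ * x ∈ π.ker := (MonoidHom.eq_iff π).1 hg.symm
  rw [← mul_inv_cancel_left (φ g) x]
  exact Subgroup.mul_mem_sup ⟨g, rfl⟩ hker

theorem map_commutator_eq_commutator (hπ : π.ker ≤ Subgroup.center Λ)
    (h : Function.Surjective (π.comp φ)) : (commutator F).map φ = commutator Λ := by
  have hsup : φ.range ⊔ Subgroup.center Λ = ⊤ :=
    top_le_iff.1 <| (range_sup_ker_eq_top_s19 h).ge.trans (sup_le_sup_left hπ _)
  rw [map_commutator_eq, commutator_eq_of_sup_center_eq_top hsup]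

theorem map_hopfQuotient (hπ : π.ker ≤ Subgroup.center Λ) (h : Function.Surjective (π.comp φ)) :
    (hopfQuotient (π.comp φ)).map (QuotientGroup.lift _ φ (commutator_top_ker_comp_le_ker hπ)) =
      π.ker ⊓ commutator Λ := by
  rw [hopfQuotient, Subgroup.map_map, QuotientGroup.lift_comp_mk', ← MonoidHom.comap_ker,
    inf_comm, subgroup_map_inf_comap, map_commutator_eq_commutator hπ h, inf_comm]

theorem isCyclic_ker_inf_commutator {ι : Type*} {p : FreeGroup ι →* Δ}
    (hp : Function.Surjective p) [IsCyclic (hopfQuotient p)] (hsurj : Function.Surjective π)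
    (hπ : π.ker ≤ Subgroup.center Λ) : IsCyclic ↥(π.ker ⊓ commutator Λ) := by
  obtain ⟨φ, rfl⟩ : ∃ φ : FreeGroup ι →* Λ, π.comp φ = p := by
    choose s hs using hsurj
    exact ⟨FreeGroup.lift fun i => s (p (.of i)), FreeGroup.ext_hom _ _ fun i => by simp [hs]⟩
  rw [← map_hopfQuotient hπ hp]
  exact isCyclic_of_surjective _ (MonoidHom.subgroupMap_surjective _ _)

end CentralExtension

section TorsionFree

variable {G : Type*} [Group G]

open scoped IsMulCommutative in
theorem isMulTorsionFree_of_pow_ne_one [IsMulCommutative G]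
    (h : ∀ x : G, x ≠ 1 → ∀ n : ℕ, 0 < n → x ^ n ≠ 1) : IsMulTorsionFree G := by
  by_contra hG
  obtain ⟨x, hx, hfin⟩ := not_isMulTorsionFree_iff_isOfFinOrder.1 hG
  obtain ⟨n, hn, hxn⟩ := isOfFinOrder_iff_pow_eq_one.1 hfin
  exact h x hx n hn hxn

open scoped IsMulCommutative in
theorem isCyclic_of_forall_pow_mem {Z C : Subgroup G} [IsMulCommutative Z] [IsMulTorsionFree Z]
    [IsCyclic C] {n : ℕ} (hn : n ≠ 0) (h : ∀ z ∈ Z, z ^ n ∈ C) : IsCyclic Z := by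
  let f : Z →* C := (Z.subtype.comp (powMonoidHom n)).codRestrict C fun z => h z z.2
  have hf : Function.Injective f := fun z w hzw =>
    pow_left_injective hn (Subtype.ext (congrArg Subtype.val hzw :))
  exact isCyclic_of_injective f hf

theorem nonempty_mulEquiv_multiplicative_int [IsCyclic G] [Nontrivial G] [IsMulTorsionFree G] :
    Nonempty (G ≃* Multiplicative ℤ) := by
  obtain ⟨x, hx⟩ := exists_ne (1 : G)
  have : Infinite G := not_finite_iff_infinite.1 fun _ =>
    not_isOfFinOrder_of_isMulTorsionFree hx (isOfFinOrder_of_finite x)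
  exact ⟨intCyclicMulEquiv.symm⟩

end TorsionFree

theorem pow_exponent_abelianization_mem_commutator {G : Type*} [Group G] (x : G) :
    x ^ Monoid.exponent (Abelianization G) ∈ commutator G := by
  rw [← Abelianization.ker_of, MonoidHom.mem_ker, map_pow, Monoid.pow_exponent_eq_one]

theorem central_kernel_infinite_cyclic_general {Λ Δ ι : Type*} [Group Λ] [Group Δ] {π : Λ →* Δ}
    (hsurj : Function.Surjective π) (hcentral : π.ker ≤ Subgroup.center Λ) (hnontriv : π.ker ≠ ⊥)
    (htorsionfree : ∀ x ∈ π.ker, x ≠ 1 → ∀ n : ℕ, 0 < n → x ^ n ≠ 1)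
    {p : FreeGroup ι →* Δ} (hp : Function.Surjective p) (hH2 : IsCyclic (hopfQuotient p))
    (hab : Monoid.ExponentExists (Abelianization Λ)) :
    Nonempty (π.ker ≃* Multiplicative ℤ) := by
  have : Nontrivial π.ker := (Subgroup.nontrivial_iff_ne_bot _).2 hnontriv
  have : IsMulCommutative π.ker := Subgroup.le_centralizer_iff_isMulCommutative.1 <|
    hcentral.trans (Subgroup.center_le_centralizer _)
  have : IsMulTorsionFree π.ker := isMulTorsionFree_of_pow_ne_one fun x hx n hn hxn =>
    htorsionfree x x.2 (by simpa using hx) n hn (congrArg Subtype.val hxn)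
  have : IsCyclic ↥(π.ker ⊓ commutator Λ) := isCyclic_ker_inf_commutator hp hsurj hcentral
  have : IsCyclic π.ker := isCyclic_of_forall_pow_mem hab.exponent_ne_zero fun z hz =>
    Subgroup.mem_inf.2 ⟨pow_mem hz _, pow_exponent_abelianization_mem_commutator z⟩
  exact nonempty_mulEquiv_multiplicative_int

/-- **Lemma.** Let `1 → Z → Λ → Δ → 1` be exact with `Z = ker π` nontrivial, torsion-free
and central in `Λ`. If `H₂(Δ,ℤ) ≅ ℤ` and the abelianization of `Λ` is finite, then `Z`
is infinite cyclic. -/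
theorem central_kernel_infinite_cyclic
    (Λ Δ : Type) [Group Λ] [Group Δ]
    (π : Λ →* Δ) (hsurj : Function.Surjective π)
    (hcentral : MonoidHom.ker π ≤ Subgroup.center Λ)
    (hnontriv : MonoidHom.ker π ≠ ⊥)
    (htorsionfree : ∀ x ∈ MonoidHom.ker π, x ≠ 1 → ∀ n : ℕ, 0 < n → x ^ n ≠ 1)
    (hH2 : SchurMultiplierInfiniteCyclic Δ)
    (hab : Finite (Abelianization Λ)) :
    Nonempty (↥(MonoidHom.ker π) ≃* Multiplicative ℤ) :=
  central_kernel_infinite_cyclic_general hsurj hcentral hnontriv htorsionfree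
    FreeGroup.prod_surjective (hH2.isCyclic_hopfQuotient FreeGroup.prod_surjective) .of_finite
end
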